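/- Adding a parallel edge into a strongly connected component preserves the E-separation model: let G = (V, E_d) be a directed graph, i, j ∈ V with i ≠ j, (i, j) ∉ E_d, i ∉ scc_G(j), and suppose there exists j′ ∈ scc_G(j) with (i, j′) ∈ E_d; let G′ = (V, E_d ∪ {(i, j)}). Then I_E^G = I_E^{G′}. -/

import Mathlib

namespace ESepPaper

/-- A directed mixed graph: directed edges and bidirected edges over a node type `V`.
A directed graph (DG) is a DMG with `Ebi = ∅`. -/
structure DMG (V : Type) where
  Ed : Set (V × V)
  Ebi : Set (Sym2 V)

variable {V : Type}

/-- `G.ancestor u v` : there is a directed path `u → … → v` (possibly trivial). -/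
def DMG.ancestor (G : DMG V) : V → V → Prop :=
  Relation.ReflTransGen (fun u v => (u, v) ∈ G.Ed)

/-- Ancestors of a set `C`. -/
def DMG.anc (G : DMG V) (C : Set V) : Set V := {u | ∃ v ∈ C, G.ancestor u v}

/-- Strongly connected component of `v`. -/
def DMG.scc (G : DMG V) (v : V) : Set V := {w | G.ancestor w v ∧ G.ancestor v w}

/-- Parents of a set of nodes. -/
def DMG.pa (G : DMG V) (S : Set V) : Set V := {w | ∃ v ∈ S, (w, v) ∈ G.Ed}

/-- Kind of a traversed edge on a walk: forward directed, backward directed, or bidirected. -/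
inductive LinkType | fwd | bwd | bi
deriving DecidableEq

/-- Validity of a link of kind `t` between consecutive walk nodes `u` and `v`. -/
def DMG.linkOK (G : DMG V) (u v : V) : LinkType → Prop
  | .fwd => (u, v) ∈ G.Ed
  | .bwd => (v, u) ∈ G.Ed
  | .bi => s(u, v) ∈ G.Ebi

/-- Arrowhead at the second (right) endpoint of the link. -/
def LinkType.headR : LinkType → Prop
  | .fwd => True
  | .bwd => False
  | .bi => True

/-- Arrowhead at the first (left) endpoint of the link. -/
def LinkType.headL : LinkType → Prop
  | .fwd => False
  | .bwd => True
  | .bi => True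

/-- Tail at the second (right) endpoint. -/
def LinkType.tailR (t : LinkType) : Prop := t = .bwd

/-- Tail at the first (left) endpoint. -/
def LinkType.tailL (t : LinkType) : Prop := t = .fwd

/-- Walks in a DMG. -/
inductive DMG.Walk (G : DMG V) : V → V → Type
  | nil (v : V) : DMG.Walk G v v
  | cons {u v w : V} (t : LinkType) (h : G.linkOK u v t) (p : DMG.Walk G v w) : DMG.Walk G u w

/-- An interior node on a walk, whose incoming link is `t1` and outgoing link is `t2`,
is a collider iff both links have an arrowhead at it. -/
def colliderAt (t1 t2 : LinkType) : Prop := t1.headR ∧ t2.headL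

/-- An interior non-collider `v` between neighbours `u` (incoming link `t1`) and `w`
(outgoing link `t2`) is unblockable: on every side where the link has a tail at `v`, the
corresponding neighbour lies in `scc_G(v)` (left-chain/right-chain/fork cases). -/
def unblockableAt (G : DMG V) (u v w : V) (t1 t2 : LinkType) : Prop :=
  (t1.tailR → u ∈ G.scc v) ∧ (t2.tailL → w ∈ G.scc v)

namespace DMG.Walk

variable {G : DMG V}

/-- First node of a walk. -/
def first {a b : V} (_ : G.Walk a b) : V := a

def length : {a b : V} → G.Walk a b → ℕ
  | _, _, .nil _ => 0
  | _, _, .cons _ _ p => p.length + 1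

def support : {a b : V} → G.Walk a b → List V
  | a, _, .nil _ => [a]
  | a, _, .cons _ _ p => a :: p.support

/-- Auxiliary: σ-openness of the remainder of a walk, where `u` is the previous node and
`t1` the link from `u` into the current first node. -/
def sigmaOpenAux (C : Set V) : (u : V) → LinkType → {b c : V} → G.Walk b c → Prop
  | _, _, _, _, .nil _ => True
  | u, t1, v, _, .cons t2 _ q =>
      ((colliderAt t1 t2 → v ∈ G.anc C) ∧
       (¬ colliderAt t1 t2 → ¬ unblockableAt G u v q.first t1 t2 → v ∉ C)) ∧
      sigmaOpenAux C v t2 q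

/-- The walk is σ-open given `C`: every collider on it is an ancestor of a node of `C`, and
no blockable non-collider on it lies in `C`. -/
def sigmaOpen (C : Set V) : {a b : V} → G.Walk a b → Prop
  | _, _, .nil _ => True
  | a, _, .cons t _ q => sigmaOpenAux C a t q

/-- All links are forward directed. -/
def IsDirected : {a b : V} → G.Walk a b → Prop
  | _, _, .nil _ => True
  | _, _, .cons t _ p => t = .fwd ∧ p.IsDirected

/-- Interior nodes of the walk (all nodes except the two endpoints). -/
def interior {a b : V} (p : G.Walk a b) : List V := p.support.tail.dropLast

/-- Arrowhead at the first endpoint. -/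
def headAtStart : {a b : V} → G.Walk a b → Prop
  | _, _, .nil _ => False
  | _, _, .cons t _ _ => t.headL

def headAtEndAux : LinkType → {a b : V} → G.Walk a b → Prop
  | t, _, _, .nil _ => t.headR
  | _, _, _, .cons t _ q => headAtEndAux t q

/-- Arrowhead at the last endpoint. -/
def headAtEnd : {a b : V} → G.Walk a b → Prop
  | _, _, .nil _ => False
  | _, _, .cons t _ q => headAtEndAux t q

def noCollidersAux : LinkType → {a b : V} → G.Walk a b → Prop
  | _, _, _, .nil _ => True
  | t1, _, _, .cons t2 _ q => ¬ colliderAt t1 t2 ∧ noCollidersAux t2 q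

/-- There is no collider on the walk. -/
def NoColliders : {a b : V} → G.Walk a b → Prop
  | _, _, .nil _ => True
  | _, _, .cons t _ q => noCollidersAux t q

def collidersInAux (S : Set V) : LinkType → {a b : V} → G.Walk a b → Prop
  | _, _, _, .nil _ => True
  | t1, v, _, .cons t2 _ q => (colliderAt t1 t2 → v ∈ S) ∧ collidersInAux S t2 q

/-- Every collider on the walk lies in `S`. -/
def CollidersIn (S : Set V) : {a b : V} → G.Walk a b → Prop
  | _, _, .nil _ => True
  | _, _, .cons t _ q => collidersInAux S t q

def noncollUnblAux : (u : V) → LinkType → {b c : V} → G.Walk b c → Prop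
  | _, _, _, _, .nil _ => True
  | u, t1, v, _, .cons t2 _ q =>
      (¬ colliderAt t1 t2 → unblockableAt G u v q.first t1 t2) ∧ noncollUnblAux v t2 q

/-- Every interior non-collider on the walk is unblockable. -/
def NoncollidersUnblockable : {a b : V} → G.Walk a b → Prop
  | _, _, .nil _ => True
  | a, _, .cons t _ q => noncollUnblAux a t q

/-- The set of edges occurring on a walk (directed edges as ordered pairs in `E_d`,
bidirected edges as unordered pairs). -/
def edges : {a b : V} → G.Walk a b → Set ((V × V) ⊕ Sym2 V)
  | _, _, .nil _ => ∅
  | a, _, .cons t _ p =>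
      insert (match t with
        | .fwd => Sum.inl (a, p.first)
        | .bwd => Sum.inl (p.first, a)
        | .bi => Sum.inr s(a, p.first)) p.edges

/-- Concatenation of walks. -/
def append : {a b c : V} → G.Walk a b → G.Walk b c → G.Walk a c
  | _, _, _, .nil _, q => q
  | _, _, _, .cons t h p, q => .cons t h (p.append q)

/-- A walk `v_0, …, v_{n+1}` is a path if no node besides the final endpoint occurs more
than once, i.e. `v_0, …, v_n` are pairwise distinct. -/
def IsPath {a b : V} (p : G.Walk a b) : Prop := p.support.dropLast.Nodup

end DMG.Walk

/-- `A` is σ-separated from `B` given `C` in `G`: every walk from a node of `A` to a node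
of `B` is σ-blocked given `C`. -/
def DMG.sigmaSep (G : DMG V) (A B C : Set V) : Prop :=
  ∀ a ∈ A, ∀ b ∈ B, ∀ p : G.Walk a b, ¬ p.sigmaOpen C

/-- The lifted dependency graph of `G`, on two copies of `V`
(`Sum.inl` is the past copy `V_0`, `Sum.inr` the future copy `V_1`). -/
def DMG.lift (G : DMG V) : DMG (V ⊕ V) where
  Ed := {e | ∃ u v, (u, v) ∈ G.Ed ∧
        (e = (Sum.inl u, Sum.inl v) ∨ e = (Sum.inl u, Sum.inr v) ∨
         e = (Sum.inr u, Sum.inr v))}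
  Ebi := {e | ∃ u v, s(u, v) ∈ G.Ebi ∧
        (e = s(Sum.inl u, Sum.inl v) ∨ e = s(Sum.inl u, Sum.inr v) ∨
         e = s(Sum.inr u, Sum.inl v) ∨ e = s(Sum.inr u, Sum.inr v))}

/-- `B` is E-separated from `A` given `C` in `G`:
`A_0` is σ-separated from `B_1` given `C_0 ∪ (C_1 \ B_1)` in the lifted dependency graph. -/
def DMG.ESep (G : DMG V) (A B C : Set V) : Prop :=
  G.lift.sigmaSep (Sum.inl '' A) (Sum.inr '' B)
    ((Sum.inl '' C) ∪ ((Sum.inr '' C) \ (Sum.inr '' B)))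

/-- The independence model `I_E^G` of E-separation triples. -/
def DMG.IE (G : DMG V) : Set (Set V × Set V × Set V) :=
  {t | G.ESep t.1 t.2.1 t.2.2}


/-- The latent projection of `G` onto the observed nodes `O`: a directed edge when there is
a non-trivial directed walk whose interior nodes are all latent, and a bidirected edge when
there is a non-trivial collider-free walk with arrowheads at both endpoints whose interior
nodes are all latent. -/
def DMG.latentProj (G : DMG V) (O : Set V) : DMG O where
  Ed := {e | ∃ p : G.Walk e.1.val e.2.val,
          p.IsDirected ∧ 0 < p.length ∧ ∀ x ∈ p.interior, x ∉ O}
  Ebi := {e | ∃ u v : O, e = s(u, v) ∧ ∃ p : G.Walk u.val v.val,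
          p.headAtStart ∧ p.headAtEnd ∧ p.NoColliders ∧ 0 < p.length ∧
          ∀ x ∈ p.interior, x ∉ O}

/-- The last edge of the walk `p` before entering `scc_G(w)` has an arrowhead at its
endpoint in `scc_G(w)` (vacuous if the walk never leaves `scc_G(w)`). -/
def DMG.lastEdgeInto (G : DMG V) {a b : V} (w : V) (p : G.Walk a b) : Prop :=
  (∀ x ∈ p.support, x ∈ G.scc w) ∨
  ∃ (x y : V) (t : LinkType) (h : G.linkOK x y t) (p₁ : G.Walk a x) (p₂ : G.Walk y b),
    p = p₁.append (.cons t h p₂) ∧ x ∉ G.scc w ∧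
    (∀ z ∈ p₂.support, z ∈ G.scc w) ∧ t.headR

/-- An (asymmetric) inducing path from `v` to `w`: a non-trivial path such that every
collider on it is an ancestor of `v` or `w`, every interior non-collider is unblockable,
and the last edge before entering `scc_G(w)` points into `scc_G(w)`. -/
def DMG.IsInducingPath (G : DMG V) {v w : V} (p : G.Walk v w) : Prop :=
  0 < p.length ∧ p.IsPath ∧
  p.CollidersIn (G.anc {v, w}) ∧ p.NoncollidersUnblockable ∧ G.lastEdgeInto w p

section Helpers

variable {W : Type} {K L : DMG W}

theorem aux_fwd_congr {C : Set W} {u u' b c : W} (q : L.Walk b c)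
    (h : q.sigmaOpenAux C u .fwd) : q.sigmaOpenAux C u' .fwd := by
  cases q with
  | nil => trivial
  | cons t2 h2 q =>
    refine ⟨⟨h.1.1, fun h1 h3 => h.1.2 h1 fun h4 => h3 ⟨?_, h4.2⟩⟩, h.2⟩
    intro h5
    cases h5

theorem extend_fwd {C : Set W} {y v c x : W} (hy : L.ancestor y v) (hv : L.ancestor v y)
    (q : L.Walk v c) (hq : q.sigmaOpenAux C x .fwd) :
    ∃ q' : L.Walk y c, q'.sigmaOpenAux C x .fwd := by
  revert hv
  unfold DMG.ancestor at hy
  induction hy using Relation.ReflTransGen.head_induction_on with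
  | refl => exact fun _ => ⟨q, hq⟩
  | @head a z haz hzv ih =>
    intro hva
    obtain ⟨q', hq'⟩ := ih (Relation.ReflTransGen.tail hva haz)
    refine ⟨.cons .fwd haz q', ⟨?_, ?_⟩, aux_fwd_congr q' hq'⟩
    · intro h
      exact h.2.elim
    · intro _ h
      refine (h ⟨?_, fun _ => ⟨?_, ?_⟩⟩).elim
      · intro h5
        cases h5
      · exact Relation.ReflTransGen.trans hzv hva
      · exact Relation.ReflTransGen.single haz

theorem extend_bwd {C : Set W} {x y z c : W} (hyz : L.ancestor y z) (hzy : L.ancestor z y)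
    (hxy : (x, y) ∈ L.Ed) (q : L.Walk x c) (hq : q.sigmaOpenAux C y .bwd) :
    ∃ (v : W) (_ : L.linkOK z v .bwd) (q' : L.Walk v c), q'.sigmaOpenAux C z .bwd := by
  revert hzy
  unfold DMG.ancestor at hyz
  induction hyz with
  | refl => exact fun _ => ⟨x, hxy, q, hq⟩
  | @tail z w hyz hzw ih =>
    intro hwy
    obtain ⟨v, hv, q', hq'⟩ := ih (Relation.ReflTransGen.head hzw hwy)
    refine ⟨z, hzw, .cons .bwd hv q', ⟨?_, ?_⟩, hq'⟩
    · intro h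
      exact h.1.elim
    · intro _ h
      refine (h ⟨fun _ => ⟨?_, ?_⟩, ?_⟩).elim
      · exact Relation.ReflTransGen.trans hwy hyz
      · exact Relation.ReflTransGen.single hzw
      · intro h5
        cases h5

theorem replace_link (hbi : K.Ebi = L.Ebi)
    (hed : ∀ x y, (x, y) ∈ K.Ed → (x, y) ∈ L.Ed ∨
      (x ∉ L.scc y ∧ ∃ y' ∈ L.scc y, (x, y') ∈ L.Ed))
    {C : Set W} {b v c : W} {t : LinkType} (h : K.linkOK b v t)
    (ih : ∀ u', (t = .bwd → b ∈ L.scc v → u' ∈ L.scc v) →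
      ∃ q' : L.Walk v c, q'.sigmaOpenAux C u' t) :
    ∃ (v' : W) (_ : L.linkOK b v' t) (q' : L.Walk v' c), q'.sigmaOpenAux C b t ∧
      (t = .fwd → v ∈ L.scc b → v' ∈ L.scc b) := by
  have key : L.linkOK b v t → ∃ (v' : W) (_ : L.linkOK b v' t) (q' : L.Walk v' c),
      q'.sigmaOpenAux C b t ∧ (t = .fwd → v ∈ L.scc b → v' ∈ L.scc b) := by
    intro hl
    obtain ⟨q', hq'⟩ := ih b (fun _ h => h)
    exact ⟨v, hl, q', hq', fun _ h => h⟩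
  cases t with
  | bi =>
    apply key
    have h' : s(b, v) ∈ K.Ebi := h
    rw [hbi] at h'
    exact h'
  | fwd =>
    rcases hed b v h with h1 | ⟨hns, y, hy, hby⟩
    · exact key h1
    · obtain ⟨q', hq'⟩ := ih b (fun h => by cases h)
      obtain ⟨q2, hq2⟩ := extend_fwd hy.1 hy.2 q' hq'
      exact ⟨y, hby, q2, hq2, fun _ h2 => (hns ⟨h2.2, h2.1⟩).elim⟩
  | bwd =>
    rcases hed v b h with h1 | ⟨hns, y, hy, hby⟩
    · exact key h1
    · obtain ⟨q', hq'⟩ := ih y (fun _ h2 => (hns ⟨h2.2, h2.1⟩).elim)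
      obtain ⟨v', hv', q2, hq2⟩ := extend_bwd hy.1 hy.2 hby q' hq'
      exact ⟨v', hv', q2, hq2, fun h => by cases h⟩

theorem transfer_aux (hanc : K.ancestor = L.ancestor) (hbi : K.Ebi = L.Ebi)
    (hed : ∀ x y, (x, y) ∈ K.Ed → (x, y) ∈ L.Ed ∨
      (x ∉ L.scc y ∧ ∃ y' ∈ L.scc y, (x, y') ∈ L.Ed))
    {C : Set W} {b c : W} (q : K.Walk b c) : ∀ (u : W) (t : LinkType),
    q.sigmaOpenAux C u t → ∀ u', (t = .bwd → u ∈ L.scc b → u' ∈ L.scc b) →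
      ∃ q' : L.Walk b c, q'.sigmaOpenAux C u' t := by
  have hscc : K.scc = L.scc := by
    funext v
    simp only [DMG.scc, hanc]
  have hC : K.anc C = L.anc C := by
    simp only [DMG.anc, hanc]
  induction q with
  | nil v => exact fun _ _ _ _ _ => ⟨.nil v, trivial⟩
  | @cons b v c t2 h q ih =>
    intro u t hq u' hu'
    obtain ⟨⟨hq1, hq2⟩, hq3⟩ := hq
    obtain ⟨v', hv', q', hq', hs⟩ := replace_link hbi hed h (ih b t2 hq3)
    refine ⟨.cons t2 hv' q', ⟨fun hc => hC ▸ hq1 hc, fun hc hub => hq2 hc fun hu => hub ?_⟩, hq'⟩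
    obtain ⟨hu1, hu2⟩ := hu
    rw [hscc] at hu1 hu2
    exact ⟨fun ht => hu' ht (hu1 ht), fun ht => hs ht (hu2 ht)⟩

theorem transfer (hanc : K.ancestor = L.ancestor) (hbi : K.Ebi = L.Ebi)
    (hed : ∀ x y, (x, y) ∈ K.Ed → (x, y) ∈ L.Ed ∨
      (x ∉ L.scc y ∧ ∃ y' ∈ L.scc y, (x, y') ∈ L.Ed))
    {A B C : Set W} (hL : L.sigmaSep A B C) : K.sigmaSep A B C := by
  intro a ha b hb p hp
  cases p with
  | nil => exact hL a ha a hb (.nil a) trivial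
  | cons t h q =>
    obtain ⟨v', hv', q', hq', -⟩ :=
      replace_link hbi hed h (transfer_aux hanc hbi hed q a t hp)
    exact hL a ha b hb (.cons t hv' q') hq'

theorem lift_anc_inl {G : DMG W} {x y : W} (h : G.ancestor x y) :
    G.lift.ancestor (Sum.inl x) (Sum.inl y) :=
  Relation.ReflTransGen.lift (p := fun u v => (u, v) ∈ G.lift.Ed) Sum.inl
    (fun a b hab => ⟨a, b, hab, Or.inl rfl⟩) _ _ h

theorem lift_anc_inr {G : DMG W} {x y : W} (h : G.ancestor x y) :
    G.lift.ancestor (Sum.inr x) (Sum.inr y) :=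
  Relation.ReflTransGen.lift (p := fun u v => (u, v) ∈ G.lift.Ed) Sum.inr
    (fun a b hab => ⟨a, b, hab, Or.inr (Or.inr rfl)⟩) _ _ h

theorem anc_of_lift {G : DMG W} {x y : W ⊕ W} (h : G.lift.ancestor x y) :
    G.ancestor (Sum.elim id id x) (Sum.elim id id y) := by
  refine Relation.ReflTransGen.lift (p := fun u v => (u, v) ∈ G.Ed) (Sum.elim id id) ?_ _ _ h
  rintro a b ⟨u, v, huv, h | h | h⟩ <;> cases h <;> exact huv

end Helpers

/-- Adding a parallel directed edge into a strongly connected component that `i` already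
points into preserves the E-separation independence model. -/
theorem add_parallel_edge {V : Type} [Fintype V] (G : DMG V) (hG : G.Ebi = ∅)
    (i j : V) (hij : i ≠ j) (hE : (i, j) ∉ G.Ed) (hscc : i ∉ G.scc j)
    (hpar : ∃ j' ∈ G.scc j, (i, j') ∈ G.Ed) :
    G.IE = (DMG.mk (insert (i, j) G.Ed) G.Ebi).IE := by
  obtain ⟨j', hj', hE'⟩ := hpar
  have hnji : ¬ G.ancestor j i := fun h =>
    hscc ⟨Relation.ReflTransGen.head hE' hj'.1, h⟩
  set G' : DMG V := DMG.mk (insert (i, j) G.Ed) G.Ebi with hG'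
  have hsub : ∀ x y, (x, y) ∈ G.lift.Ed → (x, y) ∈ G'.lift.Ed := by
    rintro x y ⟨u, v, huv, h⟩
    exact ⟨u, v, Or.inr huv, h⟩
  have hed : ∀ x y, (x, y) ∈ G'.lift.Ed → (x, y) ∈ G.lift.Ed ∨
      (x ∉ G.lift.scc y ∧ ∃ y' ∈ G.lift.scc y, (x, y') ∈ G.lift.Ed) := by
    rintro x y ⟨u, v, huv | huv, h⟩
    · cases huv
      right
      rcases h with h | h | h <;> cases h
      · exact ⟨fun h => hnji (anc_of_lift h.2), Sum.inl j',
          ⟨lift_anc_inl hj'.1, lift_anc_inl hj'.2⟩, i, j', hE', Or.inl rfl⟩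
      · exact ⟨fun h => hnji (anc_of_lift h.2), Sum.inr j',
          ⟨lift_anc_inr hj'.1, lift_anc_inr hj'.2⟩, i, j', hE', Or.inr (Or.inl rfl)⟩
      · exact ⟨fun h => hnji (anc_of_lift h.2), Sum.inr j',
          ⟨lift_anc_inr hj'.1, lift_anc_inr hj'.2⟩, i, j', hE', Or.inr (Or.inr rfl)⟩
    · exact Or.inl ⟨u, v, huv, h⟩
  have hanc : G'.lift.ancestor = G.lift.ancestor := by
    funext x y
    apply propext
    constructor
    · intro h
      unfold DMG.ancestor at h
      induction h with
      | refl => exact Relation.ReflTransGen.refl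
      | @tail z w _ hzw ih =>
        rcases hed z w hzw with h1 | ⟨_, y', hy', hzy⟩
        · exact Relation.ReflTransGen.tail ih h1
        · exact Relation.ReflTransGen.trans (Relation.ReflTransGen.tail ih hzy) hy'.1
    · intro h
      exact Relation.ReflTransGen.mono (fun a b hab => hsub a b hab) _ _ h
  have hbi : G'.lift.Ebi = G.lift.Ebi := rfl
  ext ⟨A, B, C⟩
  constructor
  · intro h
    exact transfer hanc hbi hed h
  · intro h
    exact transfer hanc.symm hbi.symm (fun x y hxy => Or.inl (hsub x y hxy)) h

end ESepPaper
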